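/- (Consistency-around-a-face-centered-cube for the pair (A2_{(0;0)}, C1_{(0)}).) There exists a nonzero polynomial p in twelve variables with complex coefficients such that: for all α1,α2,β1,β2,γ1,γ2 ∈ ℂ and all x, xa, xb, xc, zn, zw ∈ ℂ with p(α1,α2,β1,β2,γ1,γ2,x,xa,xb,xc,zn,zw) ≠ 0, there exist xd, y, ya, yb, yc, yd, ze, zs ∈ ℂ satisfying all fourteen equations of the CAFCC system for the pair (A, C) := (A2_{(0;0)}, C1_{(0)}) with parameters (α1,α2),(β1,β2),(γ1,γ2). In other words, the overdetermined system of fourteen face-centered quad equations on the face-centered cube is consistent: generic initial data x, xa, xb, xc, zn, zw admits a completion solving all fourteen equations. -/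

import Mathlib

noncomputable section

open Matrix Complex

/-- The type-A face-centered quad polynomial `A2_{(d1;d2)}`. -/
noncomputable def A2 (d1 d2 : ℕ) (x xa xb xc xd p1 p2 q1 q2 : ℂ) : ℂ :=
  (((p1-q1)+(p2-q2))*(xb*xc-xa*xd) + (p1-p2)*(xa*xc-xb*xd) + (q1-q2)*(xa*xb-xc*xd))*x
  + (p2-q1)*(xa*x^2-xb*xc*xd) - (p2-q2)*(xb*x^2-xa*xc*xd)
  - (p1-q1)*(xc*x^2-xa*xb*xd) + (p1-q2)*(xd*x^2-xa*xb*xc)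
  + (d1:ℂ)*x*(p1-p2)*(q1-q2)*((p1-q1)+(p2-q2))
      *(x+xa+xb+xc+xd-(p1-p2)^2-(p1-q1)*(p2-q1)-(p1-q2)*(p2-q2))^d2
  + (d1:ℂ)*((p1-q2)*(p2-q1)*((p1-q1)*xb+(p2-q2)*xc)*(2*x-(p1-p2)*(q1-q2))^d2
      - (p1-q1)*(p2-q2)*((p1-q1)*xa+(p2-q1)*xd)*(2*x+(p1-p2)*(q1-q2))^d2)
  + (d2:ℂ)*(xa*(p1-q1)*(p1-q2)*((p2-q2)*(p1-q2)^2-(q1-q2)*xb)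
      - xb*(p1-q1)*(p2-q1)*((p1-q2)*(p1-q1)^2-(p1-p2)*xd)
      - xc*(p1-q2)*(p2-q2)*((p2-q1)*(p2-q2)^2+(p1-p2)*xa)
      + xd*(p2-q1)*(p2-q2)*((p1-q1)*(p2-q1)^2+(q1-q2)*xc)
      + (xa*xd*(p1-q1)*(q2-p2) + xb*xc*(p2-q1)*(p1-q2)
          + (p1-p2)*(p1-q1)*(p1-q2)*(p2-q1)*(p2-q2)*(q1-q2))*((p1-q1)+(p2-q2)))

/-- The type-C face-centered quad polynomial `C2_{(δ1;δ2;δ3)}`. -/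
noncomputable def C2 (d1 d2 d3 : ℕ) (x xa xb xc xd p1 p2 q1 q2 : ℂ) : ℂ :=
  (xd-xc)*(x^2+xa*xb) + (q1-q2)*(x^2-xa*xb)*((p1-q1)+(p1-q2))^d3
  + 2*(d3:ℂ)*((p2-q1)*xa-(p2-q2)*xb)*x^2
  + ((xa+xb+2*(d2:ℂ)*(p2-q1)*(p2-q2))*(xc-xd)
      - (xa-xb)*((p2-q1)+(p2-q2))*((p1-q1)+(p1-q2))^d3 + 2*(d3:ℂ)*(q1-q2)*xa*xb)*x
  + (d1:ℂ)*((p1-q1)^(1+d2+d3)+(p1-q2)^(1+d2+d3)+2*(d2:ℂ)*xc*xd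
        -(xc+xd)*((p1-q1)+(p1-q2))^d2)
      *((q1-q2)*((d2:ℂ)*(p2-q1)*(p2-q2)-x)-xb*(p2-q1)+xa*(p2-q2))
  + (d1:ℂ)*(p2-q1)*(p2-q2)*(xc-xd+(q1-q2)*((p1-q1)+(p1-q2)-2*x)^d3)
      *(xa+xb-(q1-q2)^2-(p2-q1)*(p2-q2))^d2

/-- The type-C face-centered quad polynomial `C1_{(δ)}`. -/
noncomputable def C1 (d : ℕ) (x xa xb xc xd p1 p2 q1 q2 : ℂ) : ℂ :=
  (xc-xd)*x^2 + (2*(q1-q2)*(-((xc+xd)/2))^d - (xa+xb)*(xc-xd))*x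
  + 2*(-((xc+xd)/2))^d*((q2-p2)*xa+(p2-q1)*xb)
  + (xa*xb - (d:ℂ)*(p2-q1)*(p2-q2))*(xc-xd)

/-- The unnormalized type-A Lax matrix of `A2_{(d1;d2)}`. -/
noncomputable def NA2 (d1 d2 : ℕ) (x xa xb p1 p2 q1 q2 : ℂ) : Matrix (Fin 2) (Fin 2) ℂ :=
  x^2 • (!![q1-p1, (p2-q1)*xa-(p2-q2)*xb; 0, q2-p1]
      + (d1:ℂ) • !![0, (d2:ℂ)*(p1-p2)*(q1-q2)*((p1-q1)+(p2-q2)); 0, 0])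
  + x • (!![xa*(p1-p2)+xb*((p1-q1)+(p2-q2)), (q1-q2)*xa*xb;
            q1-q2, xb*(p1-p2)+xa*((p1-q1)+(p2-q2))]
      + (d1:ℂ) • !![(d2:ℂ)*(2*(p1-q1)*(p2-q2)^2+(p1-p2)*(q1-q2)*((p1-p2)-(q1-q2))),
            (p1-p2)*(q1-q2)*((p1-q1)+(p2-q2))
                *(xa+xb-(p1-q1)^2-(p2-q2)^2-(p1-p2)*(q1-q2))^d2
              - 2*(d2:ℂ)*(p1-q1)*(p1-q2)*(xa*(p2-q2)+xb*(q1-p2));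
            0, (d2:ℂ)*(2*(p1-q2)*(p2-q1)^2-(p1-p2)*(q1-q2)*((p1-p2)+(q1-q2)))])
  + (!![xa*xb*(q2-p1), 0; xb*(p2-q1)-xa*(p2-q2), xa*xb*(q1-p1)]
      + (d1:ℂ) • !![(p1-q2)*(p2-q1)*(p2-q2)*(xb-(p1-p2)*(q1-q2)-(p2-q2)^2)^d2
              - (d2:ℂ)*(p1-q2)*(xa*(p1-p2)*(p2-q2)-xb*(p2-q1)*(p1-q1)),
            (p1-q1)*(p1-q2)*(xb*(p2-q1)*((p1-p2)*(q2-q1)-(p1-q1)^2)^d2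
              - xa*(p2-q2)*((p1-p2)*(q1-q2)-(p1-q2)^2)^d2
              - (d2:ℂ)*(q1-q2)*(xa*xb-((p1-q1)+(p2-q2))*(p1-p2)*(p2-q1)*(p2-q2)));
            (d2:ℂ)*(p2-q1)*(p2-q2)*(q2-q1),
            (p1-q1)*(p2-q1)*(p2-q2)*(xa+(p1-p2)*(q1-q2)-(p2-q1)^2)^d2
              + (d2:ℂ)*(p1-q1)*(xa*(p1-q2)*(p2-q2)-xb*(p1-p2)*(p2-q1))])

/-- The normalization factor `D_LA = i(p1−q1)(q1+xa−p2−x)(q2+x−p2−xb)`. -/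
noncomputable def DA2a (x xa xb p1 p2 q1 q2 : ℂ) : ℂ :=
  Complex.I*(p1-q1)*(q1+xa-p2-x)*(q2+x-p2-xb)

/-- The normalization factor `D_LA = (p1−q1)(x−xa)(x−xb)`. -/
noncomputable def DA2b (x xa xb p1 p2 q1 q2 : ℂ) : ℂ :=
  (p1-q1)*(x-xa)*(x-xb)

/-- The type-A Lax matrix of `A2_{(d1;d2)}` with normalization `DA2a`. -/
noncomputable def laxA2a (d1 d2 : ℕ) (x xa xb p1 p2 q1 q2 : ℂ) : Matrix (Fin 2) (Fin 2) ℂ :=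
  (DA2a x xa xb p1 p2 q1 q2)⁻¹ • NA2 d1 d2 x xa xb p1 p2 q1 q2

/-- The type-A Lax matrix of `A2_{(d1;d2)}` with normalization `DA2b`. -/
noncomputable def laxA2b (d1 d2 : ℕ) (x xa xb p1 p2 q1 q2 : ℂ) : Matrix (Fin 2) (Fin 2) ℂ :=
  (DA2b x xa xb p1 p2 q1 q2)⁻¹ • NA2 d1 d2 x xa xb p1 p2 q1 q2

/-- The type-C Lax matrix of `C2_{(δ1;δ2;δ3)}`. -/
noncomputable def laxC2 (d1 d2 d3 : ℕ) (x xb xd p1 p2 q1 q2 : ℂ) : Matrix (Fin 2) (Fin 2) ℂ :=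
  let e12 : ℂ := ((q2-q1)+(d3:ℂ)*xb)*(xd*((q1-p1)+(q2-p1))^d2*(-1:ℂ)^d3
        + 2*(d3:ℂ)*(p1-p2)^2 + ((q1-p1)^(1+d2)+(q2-p1)^(1+d2))*((q1-p2)+(q2-p2))^d3)
      + 2*(d2:ℂ)*(xb*((p2-q1)-xd)+(p2-q2)*(xb-xd*(p2-q1)))
      - (d3:ℂ)*xb*(xd+2*(p1-p2)^2-((p2-q1)+(p2-q2)));
  let f11 : ℂ := (q1-p2)*((p2-q2)*((q1-q2)*((p1-p2)+(p1-q2)-2*xd)+(p2-q2)^2-xb)^d2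
        + xb*(2*xd-(p1-q1)-(p1-q2))^d2)*(-1:ℂ)^d3;
  let f12 : ℂ := (q1-p2)*((p2-q2)*((q1-q2)*((p2-q1)*(p2-q2)-2*(p1-q1)*(p1-q2))^d2
            *((q1-p1)+(q2-p1))^d3
          - xd*(2*(p1-q1)*(q2-q1)+(p2-q1)*(p2-q2))^d2*(-1:ℂ)^d3)
      + xb*(((q1-p1)+(q2-p1))^(1+d2+d3)-(d2:ℂ)*(p2-q2)*(q1-q2)
          - 2*((d2:ℂ)+(d3:ℂ))*(p1-q1)*(p1-q2)+xd*((p2-p1)+(q1-p1))^d2*(-1:ℂ)^d3));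
  let f22 : ℂ := (p2-q2)*(-((q2-p1)^(1+d2+d3)+(q1-p1)^(1+d2+d3))
        - xd*(2*(q1-p1)-(p2-q2))^d2*(-1:ℂ)^d3-(d2:ℂ)*(p2-q1)*(q1-q2))
      - (2*(d2:ℂ)+(d3:ℂ))*(xd-(q1-q2))*xb - (d3:ℂ)*(xd-(q1-q2)*((p1-q1)+(p1-q2)))*xb;
  x^2 • (!![1, -(q1-q2)-xd; 0, 0]
      + (d1:ℂ) • !![-(2*((d2:ℂ)+(d3:ℂ))),
            2*(d2:ℂ)*(xd+(q1-q2))+(d3:ℂ)*(2*(xd-xb*(p2-q2))+(q1-q2)*((p1-q1)+(p1-q2)+1));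
            0, -(2*(d3:ℂ)*(p2-q1))])
  + x • (!![-xb, -(xb*((p2-q1)+(p2-q2)-xd)); 1, -((p2-q1)+(p2-q2)+xd)]
      + (d1:ℂ) • !![-((q1-q2)*(2*(xd-(p1-q1)))^d2*(-1:ℂ)^d3)
              + 2*((d2:ℂ)+(d3:ℂ))*xb+(d2:ℂ)*((p2-q1)^2+(p2-q2)^2), e12;
            -(2*((d2:ℂ)+(d3:ℂ))),
            2*((d2:ℂ)+(d3:ℂ))*xd-2*(d3:ℂ)*xb*(q1-q2)
              +(2*(d2:ℂ)+(d3:ℂ))*((p2-q1)+(p2-q2))*((p1-q1)+(p1-q2)+1)^d3])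
  + (!![0, 0; -xb, xb*(xd-(q1-q2))]
      + (d1:ℂ) • !![f11, f12;
            (q2-p2)*(2*xd-(p1-p2)-(p1-q2))^d2*(-1:ℂ)^d3+2*((d2:ℂ)+(d3:ℂ))*xb, f22])

/-- The type-C Lax matrix of `C1_{(δ)}`. -/
noncomputable def laxC1 (d : ℕ) (x xb xd p1 p2 q1 q2 : ℂ) : Matrix (Fin 2) (Fin 2) ℂ :=
  ((-1:ℂ)^d/(x-xb)) •
    !![(x+(d:ℂ)*(p2-q1))*(x-xb+(d:ℂ)*(q2-p2)),
        2*((q1-q2)*x+(p2-q1)*xb)*(-(xd/2))^d+((d:ℂ)*(p2-q1)*(p2-q2)-x*(x-xb))*xd;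
        x-xb+(d:ℂ)*(q2-p2), 2*(p2-q2)*(-(xd/2))^d+(xb-x)*xd]

theorem l11 (a b g h x u v y w n : ℂ) (hh : h - a ≠ 0) (hu : u - n ≠ 0)
    (h7 : A2 0 0 u w v x n b h a g = 0)
    (ha : (g-b)*(v-n)*(x-n)*(y-n) - (h-b)*(u-n)*(x-n)*(y-n) - (g-a)*(u-n)*(v-n)*(y-n)
      + (h-a)*(u-n)*(v-n)*(x-n) = 0) :
    A2 0 0 v w u y n b g a h = 0 := by
  have key : ((h-a)*(u-n)^2) * A2 0 0 v w u y n b g a h = 0 := by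
    have e : ((h-a)*(u-n)^2) * A2 0 0 v w u y n b g a h
      = (A2 0 0 u w v 1 n b h a g - A2 0 0 u w v 0 n b h a g) *
        ((g-b)*(v-n)*(x-n)*(y-n) - (h-b)*(u-n)*(x-n)*(y-n) - (g-a)*(u-n)*(v-n)*(y-n)
          + (h-a)*(u-n)*(v-n)*(x-n))
        - ((g-b)*(v-n)*(y-n) - (h-b)*(u-n)*(y-n) + (h-a)*(u-n)*(v-n))
          * A2 0 0 u w v x n b h a g := by
      simp only [A2]; push_cast; ring
    rw [e, h7, ha]; ring
  exact (mul_eq_zero.mp key).resolve_left (mul_ne_zero hh (pow_ne_zero 2 hu))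

/-- Four-leg form of `A2_{(0;0)}`. -/
theorem legA (x xa xb xc xd p1 p2 q1 q2 : ℂ) (ha : x - xa ≠ 0) (hb : x - xb ≠ 0)
    (hc : x - xc ≠ 0) (hd : x - xd ≠ 0) :
    A2 0 0 x xa xb xc xd p1 p2 q1 q2 = 0 ↔
      (p2-q1)/(x-xa) - (p2-q2)/(x-xb) - (p1-q1)/(x-xc) + (p1-q2)/(x-xd) = 0 := by
  have e : A2 0 0 x xa xb xc xd p1 p2 q1 q2 =
      ((p2-q1)/(x-xa) - (p2-q2)/(x-xb) - (p1-q1)/(x-xc) + (p1-q2)/(x-xd))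
        * ((x-xa)*(x-xb)*(x-xc)*(x-xd)) := by
    simp only [A2]; push_cast; field_simp; ring
  rw [e, mul_eq_zero]
  constructor
  · rintro (h | h)
    · exact h
    · exact absurd h (by simp [ha, hb, hc, hd])
  · exact fun h => Or.inl h

/-- Leg form of `C1_{(0)}`. -/
theorem legC (x xa xb xc xd p1 p2 q1 q2 : ℂ) (ha : x - xa ≠ 0) (hb : x - xb ≠ 0)
    (h : xc - xd = 2*(p2-q1)/(x-xa) - 2*(p2-q2)/(x-xb)) :
    C1 0 x xa xb xc xd p1 p2 q1 q2 = 0 := by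
  have e : C1 0 x xa xb xc xd p1 p2 q1 q2 =
      ((xc - xd) - (2*(p2-q1)/(x-xa) - 2*(p2-q2)/(x-xb))) * ((x-xa)*(x-xb)) := by
    simp only [C1]; push_cast; field_simp; ring
  rw [e, h]; ring

theorem l9 (a b g h x u v w n c s r : ℂ) (hxu : x - u ≠ 0) (hxn : x - n ≠ 0)
    (hwu : w - u ≠ 0) (hwv : w - v ≠ 0)
    (h7 : A2 0 0 u w v x n b h a g = 0)
    (hs : s = c - 2*(a-b)/(x-u) + 2*(a-g)/(x-n))
    (hr : r = c + 2*(a-g)/(w-v) - 2*(a-h)/(w-u)) :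
    (x-w)*(c-s)*(c-r) = 2*(g-b)*(c-r) - 2*(g-h)*(c-s) := by
  have e : (x-w)*(c-s)*(c-r) - (2*(g-b)*(c-r) - 2*(g-h)*(c-s)) =
      -4*(g-a) * A2 0 0 u w v x n b h a g / ((x-u)*(x-n)*(w-u)*(w-v)) := by
    subst hs hr
    simp only [A2]; push_cast; field_simp; ring
  rw [h7] at e
  linear_combination e

theorem west (a b g h x u v y w n c s r : ℂ) (hh : h - a ≠ 0)
    (hun : n - u ≠ 0) (hvn : n - v ≠ 0) (hxn : n - x ≠ 0) (hyn : n - y ≠ 0)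
    (hxu : x - u ≠ 0) (hyv : y - v ≠ 0) (hwu : w - u ≠ 0) (hwv : w - v ≠ 0) (huv : u - v ≠ 0)
    (hcs : c - s ≠ 0) (hcr : c - r ≠ 0) (hrs : r - s ≠ 0)
    (h7 : (h-a)/(u-w) - (h-g)/(u-v) - (b-a)/(u-x) + (b-g)/(u-n) = 0)
    (ha : (g-b)/(n-u) - (h-b)/(n-v) = (g-a)/(n-x) - (h-a)/(n-y))
    (hs : s = c - 2*(a-b)/(x-u) + 2*(a-g)/(x-n))
    (hr : r = c + 2*(a-g)/(w-v) - 2*(a-h)/(w-u)) :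
    A2 0 0 u w v x n b h a g = 0 ∧ A2 0 0 v w u y n b g a h = 0 ∧
    s = r - 2*(a-b)/(y-v) + 2*(a-h)/(y-n) ∧
    (x-w)*(c-s)*(c-r) = 2*(g-b)*(c-r) - 2*(g-h)*(c-s) ∧
    (y-w)*(r-s)*(r-c) = 2*(h-b)*(r-c) - 2*(h-g)*(r-s) ∧
    x - y = 2*(g-b)/(c-s) - 2*(h-b)/(r-s) := by
  have n1 : ∀ p q : ℂ, p - q ≠ 0 → q - p ≠ 0 := fun p q k => by
    rw [sub_ne_zero] at *; exact k.symm
  have P7 := (legA u w v x n b h a g (n1 _ _ hwu) huv (n1 _ _ hxu) (n1 _ _ hun)).2 h7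
  have P11 : A2 0 0 v w u y n b g a h = 0 := by
    refine l11 a b g h x u v y w n hh (n1 _ _ hun) P7 ?_
    have e : (g-b)*(v-n)*(x-n)*(y-n) - (h-b)*(u-n)*(x-n)*(y-n) - (g-a)*(u-n)*(v-n)*(y-n)
      + (h-a)*(u-n)*(v-n)*(x-n) =
      -((g-b)/(n-u) - (h-b)/(n-v) - ((g-a)/(n-x) - (h-a)/(n-y))) * ((n-u)*(n-v)*(n-x)*(n-y)) := by
      field_simp; ring
    rw [e, ha]; ring
  have h11 := (legA v w u y n b g a h (n1 _ _ hwv) (n1 _ _ huv) (n1 _ _ hyv) (n1 _ _ hvn)).1 P11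
  have flip : ∀ z p q : ℂ, z/(p-q) = -(z/(q-p)) := fun z p q => by
    rw [← neg_sub q p, div_neg]
  have hc : s = r - 2*(a-b)/(y-v) + 2*(a-h)/(y-n) := by
    rw [hs, hr]
    rw [flip _ u w, flip _ u x, flip _ u n] at h7
    rw [flip _ v w, flip _ v u, flip _ v y, flip _ v n] at h11
    rw [flip _ x n, flip _ y n]
    linear_combination (2:ℂ)*h7 - 2*h11 - 2*ha
  have q9 := l9 a b g h x u v w n c s r hxu (n1 _ _ hxn) hwu hwv P7 hs hr
  have q13 := l9 a b h g y v u w n r s c hyv (n1 _ _ hyn) hwv hwu P11 hc (by rw [hr]; ring)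
  refine ⟨P7, P11, hc, q9, q13, ?_⟩
  have hrc := n1 _ _ hcr
  have k1 : x - w = 2*(g-b)/(c-s) - 2*(g-h)/(c-r) := by
    field_simp; linear_combination q9
  have k2 : y - w = 2*(h-b)/(r-s) - 2*(h-g)/(r-c) := by
    field_simp; linear_combination q13
  rw [flip _ r c] at k2
  linear_combination k1 - k2

theorem assemble (a1 a2 b1 b2 g1 g2 x xa xb xc zn zw xd y ya yb yc yd ze zs : ℂ)
    (hh : g2 - a2 ≠ 0) (hxn : zn - x ≠ 0) (hyn : zn - y ≠ 0)
    (h1 : zn - xa ≠ 0) (h2 : zn - ya ≠ 0) (h3 : x - xa ≠ 0) (h4 : y - ya ≠ 0) (h5 : zw - xa ≠ 0)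
    (h6 : zw - ya ≠ 0) (h7 : xa - ya ≠ 0) (h8 : xc - zs ≠ 0) (h9 : xc - yc ≠ 0) (h10 : yc - zs ≠ 0)
    (e1 : zn - xb ≠ 0) (e2 : zn - yb ≠ 0) (e3 : x - xb ≠ 0) (e4 : y - yb ≠ 0) (e5 : ze - xb ≠ 0)
    (e6 : ze - yb ≠ 0) (e7 : xb - yb ≠ 0) (e8 : xd - zs ≠ 0) (e9 : xd - yd ≠ 0) (e10 : yd - zs ≠ 0)
    (w7 : (g2-a2)/(xa-zw) - (g2-g1)/(xa-ya) - (b1-a2)/(xa-x) + (b1-g1)/(xa-zn) = 0)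
    (wa : (g1-b1)/(zn-xa) - (g2-b1)/(zn-ya) = (g1-a2)/(zn-x) - (g2-a2)/(zn-y))
    (f7 : (g2-a2)/(xb-ze) - (g2-g1)/(xb-yb) - (b2-a2)/(xb-x) + (b2-g1)/(xb-zn) = 0)
    (fa : (g1-b2)/(zn-xb) - (g2-b2)/(zn-yb) = (g1-a2)/(zn-x) - (g2-a2)/(zn-y))
    (hxd : xd = xc - 2*(a2-b1)/(x-xa) + 2*(a2-b2)/(x-xb))
    (hzs : zs = xc - 2*(a2-b1)/(x-xa) + 2*(a2-g1)/(x-zn))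
    (hyc : yc = xc + 2*(a2-g1)/(zw-ya) - 2*(a2-g2)/(zw-xa))
    (hyd : yd = xd + 2*(a2-g1)/(ze-yb) - 2*(a2-g2)/(ze-xb)) :
        C1 0 x xa xb xc xd a1 a2 b1 b2 = 0 ∧
        C1 0 zw ya xa yc xc a1 a2 g1 g2 = 0 ∧
        A2 0 0 zn ya yb xa xb g1 g2 b1 b2 = 0 ∧
        C1 0 y ya yb yc yd a1 a2 b1 b2 = 0 ∧
        C1 0 ze yb xb yd xd a1 a2 g1 g2 = 0 ∧
        A2 0 0 zs yc yd xc xd g1 g2 b1 b2 = 0 ∧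
        A2 0 0 xa zw ya x zn b1 g2 a2 g1 = 0 ∧
        A2 0 0 xb ze yb x zn b2 g2 a2 g1 = 0 ∧
        C1 0 xc zs yc x zw a1 g1 b1 g2 = 0 ∧
        C1 0 xd yd zs ze x a1 g1 g2 b2 = 0 ∧
        A2 0 0 ya zw xa y zn b1 g1 a2 g2 = 0 ∧
        A2 0 0 yb ze xb y zn b2 g1 a2 g2 = 0 ∧
        C1 0 yc xc zs zw y a1 g2 g1 b1 = 0 ∧
        C1 0 yd xd zs ze y a1 g2 g1 b2 = 0 := by
  have n1 : ∀ p q : ℂ, p - q ≠ 0 → q - p ≠ 0 := fun p q k => by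
    rw [sub_ne_zero] at *; exact k.symm
  have flip : ∀ z p q : ℂ, z/(p-q) = -(z/(q-p)) := fun z p q => by
    rw [← neg_sub q p, div_neg]
  obtain ⟨W7, W11, Wc, W9, W13, Wxy⟩ := west a2 b1 g1 g2 x xa ya y zw zn xc zs yc hh h1 h2 hxn hyn
    h3 h4 h5 h6 h7 h8 h9 h10 w7 wa hzs hyc
  obtain ⟨E7, E11, Ec, E9, E13, Exy⟩ := west a2 b2 g1 g2 x xb yb y ze zn xd zs yd hh e1 e2 hxn hyn
    e3 e4 e5 e6 e7 e8 e9 e10 f7 fa (by rw [hzs, hxd]; ring) hyd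
  refine ⟨?_, ?_, ?_, ?_, ?_, ?_, W7, E7, ?_, ?_, W11, E11, ?_, ?_⟩
  · exact legC _ _ _ _ _ _ _ _ _ h3 e3 (by rw [hxd]; ring)
  · exact legC _ _ _ _ _ _ _ _ _ h6 h5 (by rw [hyc]; ring)
  · exact (legA _ _ _ _ _ _ _ _ _ h2 e2 h1 e1).2 (by linear_combination fa - wa)
  · exact legC _ _ _ _ _ _ _ _ _ h4 e4 (by linear_combination Ec - Wc)
  · exact legC _ _ _ _ _ _ _ _ _ e6 e5 (by rw [hyd]; ring)
  · refine (legA _ _ _ _ _ _ _ _ _ (n1 _ _ h10) (n1 _ _ e10) (n1 _ _ h8) (n1 _ _ e8)).2 ?_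
    rw [flip _ zs yc, flip _ zs yd, flip _ zs xc, flip _ zs xd]
    linear_combination (Exy - Wxy)/2
  · simp only [C1]; push_cast; linear_combination W9
  · simp only [C1]; push_cast; linear_combination -E9
  · simp only [C1]; push_cast; linear_combination -W13
  · simp only [C1]; push_cast; linear_combination -E13

/-- The base point at which genericity is checked. -/
def v0 : Fin 12 → ℂ := ![0, -1, 4, 3, -1, 0, 3, 1, 2, -1, 4, 3]

/-- `P` holds on a principal Zariski-open neighbourhood of `v0`. -/
def Gen (P : (Fin 12 → ℂ) → Prop) : Prop :=
  ∃ q : MvPolynomial (Fin 12) ℂ, MvPolynomial.eval v0 q ≠ 0 ∧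
    ∀ v, MvPolynomial.eval v q ≠ 0 → P v

/-- `f` is a rational function regular at `v0`, with value `c` there. -/
def Reg (f : (Fin 12 → ℂ) → ℂ) (c : ℂ) : Prop :=
  f v0 = c ∧ ∃ n d : MvPolynomial (Fin 12) ℂ, MvPolynomial.eval v0 d ≠ 0 ∧
    ∀ v, MvPolynomial.eval v d ≠ 0 → f v = MvPolynomial.eval v n / MvPolynomial.eval v d

theorem Gen.and {P Q : (Fin 12 → ℂ) → Prop} (hP : Gen P) (hQ : Gen Q) :
    Gen (fun v => P v ∧ Q v) := by
  obtain ⟨p, p0, hp⟩ := hP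
  obtain ⟨q, q0, hq⟩ := hQ
  refine ⟨p * q, by simp [p0, q0], fun v hv => ?_⟩
  rw [map_mul] at hv
  exact ⟨hp v (left_ne_zero_of_mul hv), hq v (right_ne_zero_of_mul hv)⟩

theorem Reg.var (i : Fin 12) : Reg (fun v => v i) (v0 i) :=
  ⟨rfl, MvPolynomial.X i, 1, by simp, fun v _ => by simp⟩

theorem Reg.const (c : ℂ) : Reg (fun _ => c) c :=
  ⟨rfl, MvPolynomial.C c, 1, by simp, fun v _ => by simp⟩

theorem Reg.add {f g : (Fin 12 → ℂ) → ℂ} {c e : ℂ} (hf : Reg f c) (hg : Reg g e) :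
    Reg (fun v => f v + g v) (c + e) := by
  obtain ⟨f0, n, d, d0, h⟩ := hf
  obtain ⟨g0, n', d', d0', h'⟩ := hg
  refine ⟨by simp only [f0, g0], n * d' + n' * d, d * d', by simp [d0, d0'], fun v hv => ?_⟩
  rw [map_mul] at hv
  have k1 := left_ne_zero_of_mul hv
  have k2 := right_ne_zero_of_mul hv
  simp only [h v k1, h' v k2, map_add, map_mul]
  field_simp

theorem Reg.mul {f g : (Fin 12 → ℂ) → ℂ} {c e : ℂ} (hf : Reg f c) (hg : Reg g e) :
    Reg (fun v => f v * g v) (c * e) := by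
  obtain ⟨f0, n, d, d0, h⟩ := hf
  obtain ⟨g0, n', d', d0', h'⟩ := hg
  refine ⟨by simp only [f0, g0], n * n', d * d', by simp [d0, d0'], fun v hv => ?_⟩
  rw [map_mul] at hv
  have k1 := left_ne_zero_of_mul hv
  have k2 := right_ne_zero_of_mul hv
  simp only [h v k1, h' v k2, map_mul]
  field_simp

theorem Reg.sub {f g : (Fin 12 → ℂ) → ℂ} {c e : ℂ} (hf : Reg f c) (hg : Reg g e) :
    Reg (fun v => f v - g v) (c - e) := by
  have := hf.add ((Reg.const (-1)).mul hg)
  simpa [sub_eq_add_neg] using this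

theorem Reg.gen {f : (Fin 12 → ℂ) → ℂ} {c : ℂ} (hf : Reg f c) (hc : c ≠ 0) :
    Gen (fun v => f v ≠ 0) := by
  obtain ⟨f0, n, d, d0, h⟩ := hf
  have hn : MvPolynomial.eval v0 n ≠ 0 := by
    intro hn
    apply hc
    rw [← f0, h v0 d0, hn, zero_div]
  refine ⟨n * d, by simp [hn, d0], fun v hv => ?_⟩
  rw [map_mul] at hv
  rw [h v (right_ne_zero_of_mul hv)]
  exact div_ne_zero (left_ne_zero_of_mul hv) (right_ne_zero_of_mul hv)

theorem Reg.div {f g : (Fin 12 → ℂ) → ℂ} {c e : ℂ} (hf : Reg f c) (hg : Reg g e) (he : e ≠ 0) :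
    Reg (fun v => f v / g v) (c / e) := by
  obtain ⟨q, q0, hq⟩ := hg.gen he
  obtain ⟨f0, n, d, d0, h⟩ := hf
  obtain ⟨g0, n', d', d0', h'⟩ := hg
  have hn : MvPolynomial.eval v0 n' ≠ 0 := by
    intro hn
    apply he
    rw [← g0, h' v0 d0', hn, zero_div]
  refine ⟨by simp only [f0, g0], n * d' * d', d * n' * d', by simp [d0, d0', hn], fun v hv => ?_⟩
  simp only [map_mul] at hv
  have k2 := right_ne_zero_of_mul hv
  have k3 := left_ne_zero_of_mul (left_ne_zero_of_mul hv)
  have k4 := right_ne_zero_of_mul (left_ne_zero_of_mul hv)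
  simp only [h v k3, h' v k2, map_mul]
  field_simp

theorem Reg.cast {f : (Fin 12 → ℂ) → ℂ} {c e : ℂ} (hf : Reg f c) (h : c = e) : Reg f e := h ▸ hf

def fK (v : Fin 12 → ℂ) : ℂ :=
  (v 5 - v 1)/(v 7 - v 11) - (v 2 - v 1)/(v 7 - v 6) + (v 2 - v 4)/(v 7 - v 10)
def fya (v : Fin 12 → ℂ) : ℂ := v 7 - (v 5 - v 4)/fK v
def fM (v : Fin 12 → ℂ) : ℂ :=
  (v 4 - v 1)/(v 10 - v 6) - (v 4 - v 2)/(v 10 - v 7) + (v 5 - v 2)/(v 10 - fya v)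
def fy (v : Fin 12 → ℂ) : ℂ := v 10 - (v 5 - v 1)/fM v
def fL (v : Fin 12 → ℂ) : ℂ :=
  (v 4 - v 3)/(v 10 - v 8) - (v 4 - v 1)/(v 10 - v 6) + (v 5 - v 1)/(v 10 - fy v)
def fyb (v : Fin 12 → ℂ) : ℂ := v 10 - (v 5 - v 3)/fL v
def fT (v : Fin 12 → ℂ) : ℂ :=
  (v 5 - v 4)/(v 8 - fyb v) + (v 3 - v 1)/(v 8 - v 6) - (v 3 - v 4)/(v 8 - v 10)
def fze (v : Fin 12 → ℂ) : ℂ := v 8 - (v 5 - v 1)/fT v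
def fxd (v : Fin 12 → ℂ) : ℂ :=
  v 9 - 2*(v 1 - v 2)/(v 6 - v 7) + 2*(v 1 - v 3)/(v 6 - v 8)
def fzs (v : Fin 12 → ℂ) : ℂ :=
  v 9 - 2*(v 1 - v 2)/(v 6 - v 7) + 2*(v 1 - v 4)/(v 6 - v 10)
def fyc (v : Fin 12 → ℂ) : ℂ :=
  v 9 + 2*(v 1 - v 4)/(v 11 - fya v) - 2*(v 1 - v 5)/(v 11 - v 7)
def fyd (v : Fin 12 → ℂ) : ℂ :=
  fxd v + 2*(v 1 - v 4)/(fze v - fyb v) - 2*(v 1 - v 5)/(fze v - v 8)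

theorem r1 : Reg (fun v => v 1) (-1) := Reg.var 1
theorem r2 : Reg (fun v => v 2) 4 := Reg.var 2
theorem r3 : Reg (fun v => v 3) 3 := Reg.var 3
theorem r4 : Reg (fun v => v 4) (-1) := Reg.var 4
theorem r5 : Reg (fun v => v 5) 0 := Reg.var 5
theorem r6 : Reg (fun v => v 6) 3 := Reg.var 6
theorem r7 : Reg (fun v => v 7) 1 := Reg.var 7
theorem r8 : Reg (fun v => v 8) 2 := Reg.var 8
theorem r9 : Reg (fun v => v 9) (-1) := Reg.var 9
theorem r10 : Reg (fun v => v 10) 4 := Reg.var 10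
theorem r11 : Reg (fun v => v 11) 3 := Reg.var 11

theorem rK : Reg fK (1/3) :=
  ((((r5.sub r1).div (r7.sub r11) (by norm_num)).sub
    ((r2.sub r1).div (r7.sub r6) (by norm_num))).add
    ((r2.sub r4).div (r7.sub r10) (by norm_num))).cast (by norm_num)
theorem rya : Reg fya (-2) := (r7.sub ((r5.sub r4).div rK (by norm_num))).cast (by norm_num)
theorem rM : Reg fM 1 :=
  ((((r4.sub r1).div (r10.sub r6) (by norm_num)).sub
    ((r4.sub r2).div (r10.sub r7) (by norm_num))).add
    ((r5.sub r2).div (r10.sub rya) (by norm_num))).cast (by norm_num)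
theorem ry : Reg fy 3 := (r10.sub ((r5.sub r1).div rM (by norm_num))).cast (by norm_num)
theorem rL : Reg fL (-1) :=
  ((((r4.sub r3).div (r10.sub r8) (by norm_num)).sub
    ((r4.sub r1).div (r10.sub r6) (by norm_num))).add
    ((r5.sub r1).div (r10.sub ry) (by norm_num))).cast (by norm_num)
theorem ryb : Reg fyb 1 := (r10.sub ((r5.sub r3).div rL (by norm_num))).cast (by norm_num)
theorem rT : Reg fT (-1) :=
  ((((r5.sub r4).div (r8.sub ryb) (by norm_num)).add
    ((r3.sub r1).div (r8.sub r6) (by norm_num))).sub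
    ((r3.sub r4).div (r8.sub r10) (by norm_num))).cast (by norm_num)
theorem rze : Reg fze 3 := (r8.sub ((r5.sub r1).div rT (by norm_num))).cast (by norm_num)
theorem rxd : Reg fxd (-4) :=
  ((r9.sub (((Reg.const 2).mul (r1.sub r2)).div (r6.sub r7) (by norm_num))).add
    (((Reg.const 2).mul (r1.sub r3)).div (r6.sub r8) (by norm_num))).cast (by norm_num)
theorem rzs : Reg fzs 4 :=
  ((r9.sub (((Reg.const 2).mul (r1.sub r2)).div (r6.sub r7) (by norm_num))).add
    (((Reg.const 2).mul (r1.sub r4)).div (r6.sub r10) (by norm_num))).cast (by norm_num)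
theorem ryc : Reg fyc 0 :=
  ((r9.add (((Reg.const 2).mul (r1.sub r4)).div (r11.sub rya) (by norm_num))).sub
    (((Reg.const 2).mul (r1.sub r5)).div (r11.sub r7) (by norm_num))).cast (by norm_num)
theorem ryd : Reg fyd (-2) :=
  ((rxd.add (((Reg.const 2).mul (r1.sub r4)).div (rze.sub ryb) (by norm_num))).sub
    (((Reg.const 2).mul (r1.sub r5)).div (rze.sub r8) (by norm_num))).cast (by norm_num)

theorem solve_leg (p n k : ℂ) (hn : n ≠ 0) : n / (p - (p - n/k)) = k := by
  rw [sub_sub_cancel, div_div_cancel₀ hn]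

theorem statement12 :
    ∃ p : MvPolynomial (Fin 12) ℂ, p ≠ 0 ∧
    ∀ a1 a2 b1 b2 g1 g2 x xa xb xc zn zw : ℂ,
      MvPolynomial.eval (![a1, a2, b1, b2, g1, g2, x, xa, xb, xc, zn, zw]) p ≠ 0 →
      ∃ xd y ya yb yc yd ze zs : ℂ,
        C1 0 x xa xb xc xd a1 a2 b1 b2 = 0 ∧
        C1 0 zw ya xa yc xc a1 a2 g1 g2 = 0 ∧
        A2 0 0 zn ya yb xa xb g1 g2 b1 b2 = 0 ∧
        C1 0 y ya yb yc yd a1 a2 b1 b2 = 0 ∧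
        C1 0 ze yb xb yd xd a1 a2 g1 g2 = 0 ∧
        A2 0 0 zs yc yd xc xd g1 g2 b1 b2 = 0 ∧
        A2 0 0 xa zw ya x zn b1 g2 a2 g1 = 0 ∧
        A2 0 0 xb ze yb x zn b2 g2 a2 g1 = 0 ∧
        C1 0 xc zs yc x zw a1 g1 b1 g2 = 0 ∧
        C1 0 xd yd zs ze x a1 g1 g2 b2 = 0 ∧
        A2 0 0 ya zw xa y zn b1 g1 a2 g2 = 0 ∧
        A2 0 0 yb ze xb y zn b2 g1 a2 g2 = 0 ∧
        C1 0 yc xc zs zw y a1 g2 g1 b1 = 0 ∧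
        C1 0 yd xd zs ze y a1 g2 g1 b2 = 0 := by

  have G := (r5.sub r1).gen (by norm_num) |>.and <|
    (r10.sub r6).gen (by norm_num) |>.and <|
    (r10.sub ry).gen (by norm_num) |>.and <|
    (r10.sub r7).gen (by norm_num) |>.and <|
    (r10.sub rya).gen (by norm_num) |>.and <|
    (r6.sub r7).gen (by norm_num) |>.and <|
    (ry.sub rya).gen (by norm_num) |>.and <|
    (r11.sub r7).gen (by norm_num) |>.and <|
    (r11.sub rya).gen (by norm_num) |>.and <|
    (r7.sub rya).gen (by norm_num) |>.and <|
    (r9.sub rzs).gen (by norm_num) |>.and <|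
    (r9.sub ryc).gen (by norm_num) |>.and <|
    (ryc.sub rzs).gen (by norm_num) |>.and <|
    (r10.sub r8).gen (by norm_num) |>.and <|
    (r10.sub ryb).gen (by norm_num) |>.and <|
    (r6.sub r8).gen (by norm_num) |>.and <|
    (ry.sub ryb).gen (by norm_num) |>.and <|
    (rze.sub r8).gen (by norm_num) |>.and <|
    (rze.sub ryb).gen (by norm_num) |>.and <|
    (r8.sub ryb).gen (by norm_num) |>.and <|
    (rxd.sub rzs).gen (by norm_num) |>.and <|
    (rxd.sub ryd).gen (by norm_num) |>.and <|
    (ryd.sub rzs).gen (by norm_num) |>.and <|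
    (r5.sub r4).gen (by norm_num) |>.and <|
    (r5.sub r3).gen (by norm_num)
  obtain ⟨p, p0, hp⟩ := G
  refine ⟨p, fun h => p0 (by rw [h, map_zero]), ?_⟩
  intro a1 a2 b1 b2 g1 g2 x xa xb xc zn zw hv
  obtain ⟨q1, q2, q3, q4, q5, q6, q7, q8, q9, q10, q11, q12, q13, q14, q15, q16, q17, q18, q19,
    q20, q21, q22, q23, q24, q25⟩ := hp _ hv
  set v : Fin 12 → ℂ := ![a1, a2, b1, b2, g1, g2, x, xa, xb, xc, zn, zw] with hvdef
  have s7 := solve_leg (v 7) (v 5 - v 4) (fK v) q24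
  have sy := solve_leg (v 10) (v 5 - v 1) (fM v) q1
  have sb := solve_leg (v 10) (v 5 - v 3) (fL v) q25
  have se := solve_leg (v 8) (v 5 - v 1) (fT v) q1
  have w7 : (v 5 - v 1)/(v 7 - v 11) - (v 5 - v 4)/(v 7 - fya v) - (v 2 - v 1)/(v 7 - v 6)
      + (v 2 - v 4)/(v 7 - v 10) = 0 := by
    rw [show (v 5 - v 4)/(v 7 - fya v) = fK v from s7, fK]; ring
  have wa : (v 4 - v 2)/(v 10 - v 7) - (v 5 - v 2)/(v 10 - fya v)
      = (v 4 - v 1)/(v 10 - v 6) - (v 5 - v 1)/(v 10 - fy v) := by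
    rw [show (v 5 - v 1)/(v 10 - fy v) = fM v from sy, fM]; ring
  have fa : (v 4 - v 3)/(v 10 - v 8) - (v 5 - v 3)/(v 10 - fyb v)
      = (v 4 - v 1)/(v 10 - v 6) - (v 5 - v 1)/(v 10 - fy v) := by
    rw [show (v 5 - v 3)/(v 10 - fyb v) = fL v from sb, fL]; ring
  have f7 : (v 5 - v 1)/(v 8 - fze v) - (v 5 - v 4)/(v 8 - fyb v) - (v 3 - v 1)/(v 8 - v 6)
      + (v 3 - v 4)/(v 8 - v 10) = 0 := by
    rw [show (v 5 - v 1)/(v 8 - fze v) = fT v from se, fT]; ring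
  exact ⟨fxd v, fy v, fya v, fyb v, fyc v, fyd v, fze v, fzs v,
    assemble (v 0) (v 1) (v 2) (v 3) (v 4) (v 5) (v 6) (v 7) (v 8) (v 9) (v 10) (v 11) _ _ _ _ _ _ _ _
      q1 q2 q3 q4 q5 q6 q7 q8 q9 q10 q11 q12 q13 q14 q15 q16 q17 q18 q19 q20 q21 q22 q23
      w7 wa f7 fa rfl rfl rfl rfl⟩
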